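/- Case (0,1,0) of Inverse_L completeness: For typed ASP λ-calculus formulas H and G in β-normal form where H has order 0 and G has order 0, if there exists a typed ASP λ-calculus formula F of order 1 in β-normal form with H = F @ G, then Inverse_L(H,G) returns a non-null formula F' with H = F' @ G. -/

import Mathlib

/- Typed Answer Set Programming lambda calculus (Baral, Dzifcak, Gonzalez, Gottesman).

   Base types: e (terms), a (atoms), l (literals), g (gen-literals),
   d (bodies), h (heads), t (satisfiability values).  Terms are de Bruijn
   lambda terms over ASP connectives; function and predicate symbols are
   constants of iterated arrow type applied via `app`. -/

namespace ASPLambda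

inductive BTy : Type
  | e | a | l | g | d | h | t
deriving DecidableEq, Repr

inductive Ty : Type
  | base : BTy → Ty
  | arrow : Ty → Ty → Ty
deriving DecidableEq, Repr

/-- The order of a type: base types have order 0,
    `order (A → B) = max (order A + 1) (order B)`. -/
def Ty.order : Ty → ℕ
  | .base _ => 0
  | .arrow A B => max (A.order + 1) B.order

/-- Iterated arrow type `A → ⋯ → A → B` with `n` arguments. -/
def Ty.arrN : ℕ → Ty → Ty → Ty
  | 0, _, B => B
  | n + 1, A, B => .arrow A (Ty.arrN n A B)

/-- ASP typed terms (de Bruijn representation).  `neg` is classical negation ¬,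
    `naf` is negation as failure (not), `disj` is `or`, `conj` is `,`,
    `rule h b` is `h ← b.`, `ruleH h` is `h ←.`, `ruleB b` is `← b.`,
    and `seq` juxtaposes rules/programs. -/
inductive Tm : Type
  | var : ℕ → Tm
  | const : String → Ty → Tm
  | app : Tm → Tm → Tm
  | lam : Ty → Tm → Tm
  | neg : Tm → Tm
  | naf : Tm → Tm
  | disj : Tm → Tm → Tm
  | conj : Tm → Tm → Tm
  | rule : Tm → Tm → Tm
  | ruleH : Tm → Tm
  | ruleB : Tm → Tm
  | seq : Tm → Tm → Tm
deriving DecidableEq, Repr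

namespace Tm

/-- de Bruijn shift by `dpl` of indices ≥ `c`. -/
def shift (dpl c : ℕ) : Tm → Tm
  | .var n => if n < c then .var n else .var (n + dpl)
  | .const s A => .const s A
  | .app f x => .app (f.shift dpl c) (x.shift dpl c)
  | .lam A b => .lam A (b.shift dpl (c + 1))
  | .neg x => .neg (x.shift dpl c)
  | .naf x => .naf (x.shift dpl c)
  | .disj x y => .disj (x.shift dpl c) (y.shift dpl c)
  | .conj x y => .conj (x.shift dpl c) (y.shift dpl c)
  | .rule x y => .rule (x.shift dpl c) (y.shift dpl c)
  | .ruleH x => .ruleH (x.shift dpl c)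
  | .ruleB x => .ruleB (x.shift dpl c)
  | .seq x y => .seq (x.shift dpl c) (y.shift dpl c)

/-- Substitution of `s` for de Bruijn index `j` (decrementing higher indices). -/
def subst : ℕ → Tm → Tm → Tm
  | j, s, .var n => if n = j then s else if j < n then .var (n - 1) else .var n
  | _, _, .const c A => .const c A
  | j, s, .app f x => .app (subst j s f) (subst j s x)
  | j, s, .lam A b => .lam A (subst (j + 1) (s.shift 1 0) b)
  | j, s, .neg x => .neg (subst j s x)
  | j, s, .naf x => .naf (subst j s x)
  | j, s, .disj x y => .disj (subst j s x) (subst j s y)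
  | j, s, .conj x y => .conj (subst j s x) (subst j s y)
  | j, s, .rule x y => .rule (subst j s x) (subst j s y)
  | j, s, .ruleH x => .ruleH (subst j s x)
  | j, s, .ruleB x => .ruleB (subst j s x)
  | j, s, .seq x y => .seq (subst j s x) (subst j s y)

/-- Whether the de Bruijn index `k` occurs free. -/
def hasFree (k : ℕ) : Tm → Bool
  | .var n => n == k
  | .const _ _ => false
  | .app f x => f.hasFree k || x.hasFree k
  | .lam _ b => b.hasFree (k + 1)
  | .neg x => x.hasFree k
  | .naf x => x.hasFree k
  | .disj x y => x.hasFree k || y.hasFree k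
  | .conj x y => x.hasFree k || y.hasFree k
  | .rule x y => x.hasFree k || y.hasFree k
  | .ruleH x => x.hasFree k
  | .ruleB x => x.hasFree k
  | .seq x y => x.hasFree k || y.hasFree k

/-- Every abstractor binds (at least one occurrence of) its variable (λI condition). -/
def lamI : Tm → Bool
  | .var _ => true
  | .const _ _ => true
  | .app f x => f.lamI && x.lamI
  | .lam _ b => b.lamI && b.hasFree 0
  | .neg x => x.lamI
  | .naf x => x.lamI
  | .disj x y => x.lamI && y.lamI
  | .conj x y => x.lamI && y.lamI
  | .rule x y => x.lamI && y.lamI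
  | .ruleH x => x.lamI
  | .ruleB x => x.lamI
  | .seq x y => x.lamI && y.lamI

/-- A λ-term in the sense of the signature: a variable or a constant. -/
def isVarOrConst : Tm → Bool
  | .var _ => true
  | .const _ _ => true
  | _ => false

/-- Contains no lambda abstractor. -/
def noLam : Tm → Bool
  | .var _ => true
  | .const _ _ => true
  | .app f x => f.noLam && x.noLam
  | .lam _ _ => false
  | .neg x => x.noLam
  | .naf x => x.noLam
  | .disj x y => x.noLam && y.noLam
  | .conj x y => x.noLam && y.noLam
  | .rule x y => x.noLam && y.noLam
  | .ruleH x => x.noLam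
  | .ruleB x => x.noLam
  | .seq x y => x.noLam && y.noLam

/-- The head of an application spine is a variable. -/
def headIsVar : Tm → Bool
  | .var _ => true
  | .app f _ => f.headIsVar
  | _ => false

/-- Contains no application whose head is a (bound) variable. -/
def noVarApp : Tm → Bool
  | .var _ => true
  | .const _ _ => true
  | .app f x => !(f.headIsVar) && f.noVarApp && x.noVarApp
  | .lam _ b => b.noVarApp
  | .neg x => x.noVarApp
  | .naf x => x.noVarApp
  | .disj x y => x.noVarApp && y.noVarApp
  | .conj x y => x.noVarApp && y.noVarApp
  | .rule x y => x.noVarApp && y.noVarApp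
  | .ruleH x => x.noVarApp
  | .ruleB x => x.noVarApp
  | .seq x y => x.noVarApp && y.noVarApp

/-- Number of symbols of a formula (its size). -/
def size : Tm → ℕ
  | .var _ => 1
  | .const _ _ => 1
  | .app f x => f.size + x.size + 1
  | .lam _ b => b.size + 1
  | .neg x => x.size + 1
  | .naf x => x.size + 1
  | .disj x y => x.size + y.size + 1
  | .conj x y => x.size + y.size + 1
  | .rule x y => x.size + y.size + 1
  | .ruleH x => x.size + 1
  | .ruleB x => x.size + 1
  | .seq x y => x.size + y.size + 1

/-- Number of lambda abstractors; in a formula (where every abstractor binds a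
    variable and every variable is bound) this is the number of variables. -/
def numAbs : Tm → ℕ
  | .var _ => 0
  | .const _ _ => 0
  | .app f x => f.numAbs + x.numAbs
  | .lam _ b => b.numAbs + 1
  | .neg x => x.numAbs
  | .naf x => x.numAbs
  | .disj x y => x.numAbs + y.numAbs
  | .conj x y => x.numAbs + y.numAbs
  | .rule x y => x.numAbs + y.numAbs
  | .ruleH x => x.numAbs
  | .ruleB x => x.numAbs
  | .seq x y => x.numAbs + y.numAbs

/-- Replacement `t(A : B)`: replace every occurrence of `A` in `t` by `B`
    (shifting under binders). -/
def replace : Tm → Tm → Tm → Tm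
  | .var n, A, B => if Tm.var n = A then B else .var n
  | .const s T, A, B => if Tm.const s T = A then B else .const s T
  | .app f x, A, B => if Tm.app f x = A then B else .app (f.replace A B) (x.replace A B)
  | .lam T b, A, B => if Tm.lam T b = A then B else .lam T (b.replace (A.shift 1 0) (B.shift 1 0))
  | .neg x, A, B => if Tm.neg x = A then B else .neg (x.replace A B)
  | .naf x, A, B => if Tm.naf x = A then B else .naf (x.replace A B)
  | .disj x y, A, B => if Tm.disj x y = A then B else .disj (x.replace A B) (y.replace A B)
  | .conj x y, A, B => if Tm.conj x y = A then B else .conj (x.replace A B) (y.replace A B)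
  | .rule x y, A, B => if Tm.rule x y = A then B else .rule (x.replace A B) (y.replace A B)
  | .ruleH x, A, B => if Tm.ruleH x = A then B else .ruleH (x.replace A B)
  | .ruleB x, A, B => if Tm.ruleB x = A then B else .ruleB (x.replace A B)
  | .seq x y, A, B => if Tm.seq x y = A then B else .seq (x.replace A B) (y.replace A B)

/-- Simultaneous sequential replacement `t(A₁,…,Aₙ : B₁,…,Bₙ)`. -/
def replaceList : Tm → List (Tm × Tm) → Tm
  | t, [] => t
  | t, (A, B) :: r => (t.replace A B).replaceList r

/-- Iterated abstraction `λv₁ … λvₙ. b`. -/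
def lams : List Ty → Tm → Tm
  | [], b => b
  | A :: r, b => .lam A (Tm.lams r b)

/-- Iterated application `f @ x₁ @ ⋯ @ xₙ`. -/
def apps : Tm → List Tm → Tm
  | f, [] => f
  | f, x :: r => Tm.apps (.app f x) r

end Tm

/-- Typing relation for ASP typed terms (Definition "ASP Typed Term").
    The coercion rules carry the side condition that the coerced term
    is not a λ-term (i.e. not a variable or constant). -/
inductive HasType : List Ty → Tm → Ty → Prop
  | var {Γ n A} : Γ[n]? = some A → HasType Γ (.var n) A
  | const {Γ s A} : HasType Γ (.const s A) A
  | app {Γ f x A B} : HasType Γ f (.arrow A B) → HasType Γ x A → HasType Γ (.app f x) B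
  | lam {Γ b A B} : HasType (A :: Γ) b B → HasType Γ (.lam A b) (.arrow A B)
  | atomLit {Γ x} : HasType Γ x (.base .a) → x.isVarOrConst = false → HasType Γ x (.base .l)
  | negLit {Γ x} : HasType Γ x (.base .a) → HasType Γ (.neg x) (.base .l)
  | litGen {Γ x} : HasType Γ x (.base .l) → x.isVarOrConst = false → HasType Γ x (.base .g)
  | nafGen {Γ x} : HasType Γ x (.base .l) → HasType Γ (.naf x) (.base .g)
  | litHead {Γ x} : HasType Γ x (.base .l) → x.isVarOrConst = false → HasType Γ x (.base .h)
  | disj {Γ x y} : HasType Γ x (.base .h) → HasType Γ y (.base .h) →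
      HasType Γ (.disj x y) (.base .h)
  | genBody {Γ x} : HasType Γ x (.base .g) → x.isVarOrConst = false → HasType Γ x (.base .d)
  | conj {Γ x y} : HasType Γ x (.base .d) → HasType Γ y (.base .d) →
      HasType Γ (.conj x y) (.base .d)
  | rule {Γ x y} : HasType Γ x (.base .h) → HasType Γ y (.base .d) →
      HasType Γ (.rule x y) (.base .t)
  | ruleH {Γ x} : HasType Γ x (.base .h) → HasType Γ (.ruleH x) (.base .t)
  | ruleB {Γ y} : HasType Γ y (.base .d) → HasType Γ (.ruleB y) (.base .t)
  | seq {Γ x y} : HasType Γ x (.base .t) → HasType Γ y (.base .t) →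
      HasType Γ (.seq x y) (.base .t)

/-- A typed ASP λ-calculus formula of type `A`: a closed well-typed ASP term
    in which every abstractor binds a variable. -/
structure IsFormula (t : Tm) (A : Ty) : Prop where
  typed : HasType [] t A
  lamI : t.lamI = true

/-- One step of β-reduction (with congruence through all constructors). -/
inductive Step : Tm → Tm → Prop
  | beta {A b x} : Step (.app (.lam A b) x) (Tm.subst 0 x b)
  | appL {f f' x} : Step f f' → Step (.app f x) (.app f' x)
  | appR {f x x'} : Step x x' → Step (.app f x) (.app f x')
  | lam {A b b'} : Step b b' → Step (.lam A b) (.lam A b')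
  | neg {x x'} : Step x x' → Step (.neg x) (.neg x')
  | naf {x x'} : Step x x' → Step (.naf x) (.naf x')
  | disjL {x x' y} : Step x x' → Step (.disj x y) (.disj x' y)
  | disjR {x y y'} : Step y y' → Step (.disj x y) (.disj x y')
  | conjL {x x' y} : Step x x' → Step (.conj x y) (.conj x' y)
  | conjR {x y y'} : Step y y' → Step (.conj x y) (.conj x y')
  | ruleL {x x' y} : Step x x' → Step (.rule x y) (.rule x' y)
  | ruleR {x y y'} : Step y y' → Step (.rule x y) (.rule x y')
  | ruleH {x x'} : Step x x' → Step (.ruleH x) (.ruleH x')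
  | ruleB {x x'} : Step x x' → Step (.ruleB x) (.ruleB x')
  | seqL {x x' y} : Step x x' → Step (.seq x y) (.seq x' y)
  | seqR {x y y'} : Step y y' → Step (.seq x y) (.seq x y')

/-- Multi-step β-reduction. -/
abbrev Steps : Tm → Tm → Prop := Relation.ReflTransGen Step

/-- β-normal form: no β-redex occurrences, i.e. no step is possible. -/
def Tm.IsNormal (t : Tm) : Prop := ∀ u, ¬ Step t u

/-- `N` is the β-normal form of `M`. -/
def NormalizesTo (M N : Tm) : Prop := Steps M N ∧ N.IsNormal

/-- `Occurs P Q`: the term `P` occurs in `Q` (`P` is a sub-term of `Q`). -/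
inductive Occurs : Tm → Tm → Prop
  | refl (t : Tm) : Occurs t t
  | appL {P M N} : Occurs P M → Occurs P (.app M N)
  | appR {P M N} : Occurs P N → Occurs P (.app M N)
  | lam {P A M} : Occurs P M → Occurs P (.lam A M)
  | neg {P M} : Occurs P M → Occurs P (.neg M)
  | naf {P M} : Occurs P M → Occurs P (.naf M)
  | disjL {P M N} : Occurs P M → Occurs P (.disj M N)
  | disjR {P M N} : Occurs P N → Occurs P (.disj M N)
  | conjL {P M N} : Occurs P M → Occurs P (.conj M N)
  | conjR {P M N} : Occurs P N → Occurs P (.conj M N)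
  | ruleL {P M N} : Occurs P M → Occurs P (.rule M N)
  | ruleR {P M N} : Occurs P N → Occurs P (.rule M N)
  | ruleH {P M} : Occurs P M → Occurs P (.ruleH M)
  | ruleB {P M} : Occurs P M → Occurs P (.ruleB M)
  | seqL {P M N} : Occurs P M → Occurs P (.seq M N)
  | seqR {P M N} : Occurs P N → Occurs P (.seq M N)

/-- The `Inverse_L` algorithm, as a relation: `InvL H G F` holds exactly when
    one of the four cases of `Inverse_L(H,G)` applies and produces the
    (non-null) output `F`.  Variables `v₁,…,v_s` are represented by de Bruijn
    indices: under binders `λv₁…λv_s`, the variable `v_k` is index `s - k`. -/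
inductive InvL : Tm → Tm → Tm → Prop
  | case1 (H : Tm) (A : Ty) :
      InvL H (.lam A (.var 0)) (.lam (.arrow A A) (.app (.var 0) (H.shift 1 0)))
  | case2 (H G : Tm) (A : Ty) :
      Occurs G H → HasType [] G A →
      InvL H G (.lam A ((H.shift 1 0).replace (G.shift 1 0) (.var 0)))
  | case3 (H G : Tm) (W : Ty) (Js : List (Tm × List Tm)) (tys : List Ty)
      (ks : List ℕ) (s m : ℕ) :
      (∀ A : Ty, G ≠ .lam A (.var 0)) →
      Js ≠ [] →
      tys.length = s → 1 ≤ s → s ≤ m → ks.length = m →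
      (∀ k ∈ ks, 1 ≤ k ∧ k ≤ s) →
      (∀ Ja ∈ Js, Ja.2.length = m ∧ Occurs Ja.1 H ∧ (∀ x ∈ Ja.2, Occurs x Ja.1) ∧
        G = Tm.lams tys ((Ja.1.shift s 0).replaceList
              ((Ja.2.map (fun x => x.shift s 0)).zip
                (ks.map (fun k => Tm.var (s - k)))))) →
      InvL H G (.lam W ((H.shift 1 0).replaceList
        (Js.map (fun Ja => (Ja.1.shift 1 0,
          Tm.apps (.var 0) (ks.map (fun k => (Ja.2.getD (k - 1) Ja.1).shift 1 0)))))))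
  | case4 (H G : Tm) (W W' : Ty) (tysI tysS : List Ty) (J J1 : Tm)
      (args : List Tm) (ks : List ℕ) (i s : ℕ) :
      tysI.length = i → tysS.length = s - i → i < s →
      args.length = s - i → ks.length = s - i →
      (∀ k ∈ ks, i + 1 ≤ k ∧ k ≤ s) →
      H = Tm.lams tysI J →
      Occurs J1 J → (∀ x ∈ args, Occurs x J1) →
      G = .lam W ((J.shift 1 0).replace (J1.shift 1 0)
            (Tm.apps (.var 0) (ks.map (fun k => (args.getD (k - i - 1) J1).shift 1 0)))) →
      InvL H G (.lam W' (Tm.lams tysI (.app (.var i)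
        (Tm.lams tysS ((J1.shift (s + 1) 0).replaceList
          ((args.map (fun x => x.shift (s + 1) 0)).zip
            (ks.map (fun k => Tm.var (s - k)))))))))

/-- The `Inverse_R` algorithm, as a relation: `InvR H G F` holds exactly when
    one of the four cases of `Inverse_R(H,G)` applies and produces the
    (non-null) output `F`. -/
inductive InvR : Tm → Tm → Tm → Prop
  | case1 (H G J F : Tm) (A : Ty) :
      G = .lam A (.app (.var 0) (J.shift 1 0)) →
      InvL H J F → InvR H G F
  | case2 (H G J : Tm) (A : Ty) :
      Occurs J H → HasType [] J A →
      G = .lam A ((H.shift 1 0).replace (J.shift 1 0) (.var 0)) →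
      InvR H G J
  | case3 (H G : Tm) (W : Ty) (Js : List (Tm × List Tm)) (tys : List Ty)
      (ks : List ℕ) (s m : ℕ) (J1 : Tm) (args1 : List Tm) :
      (∀ (A : Ty) (J : Tm), G ≠ .lam A (.app (.var 0) (J.shift 1 0))) →
      Js ≠ [] → Js.head? = some (J1, args1) →
      tys.length = s → 1 ≤ s → s ≤ m → ks.length = m →
      (∀ k ∈ ks, 1 ≤ k ∧ k ≤ m) →
      (∀ Ja ∈ Js, Ja.2.length = m ∧ Occurs Ja.1 H ∧ (∀ x ∈ Ja.2, Occurs x Ja.1)) →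
      G = .lam W ((H.shift 1 0).replaceList
        (Js.map (fun Ja => (Ja.1.shift 1 0,
          Tm.apps (.var 0) (ks.map (fun k => (Ja.2.getD (k - 1) Ja.1).shift 1 0)))))) →
      InvR H G (Tm.lams tys ((J1.shift s 0).replaceList
        ((args1.map (fun x => x.shift s 0)).zip (ks.map (fun k => Tm.var (s - k))))))
  | case4 (H G : Tm) (W W' : Ty) (tysI tysS : List Ty) (J J1 : Tm)
      (args : List Tm) (ks : List ℕ) (i s : ℕ) :
      tysI.length = i → tysS.length = s - i → i < s →
      args.length = s - i → ks.length = s - i →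
      (∀ k ∈ ks, i + 1 ≤ k ∧ k ≤ s) →
      H = Tm.lams tysI J →
      Occurs J1 J → (∀ x ∈ args, Occurs x J1) →
      G = .lam W (Tm.lams tysI (.app (.var i)
        (Tm.lams tysS ((J1.shift (s + 1) 0).replaceList
          ((args.map (fun x => x.shift (s + 1) 0)).zip
            (ks.map (fun k => Tm.var (s - k)))))))) →
      InvR H G (.lam W' ((J.shift 1 0).replace (J1.shift 1 0)
        (Tm.apps (.var 0) (ks.map (fun k => (args.getD (k - i - 1) J1).shift 1 0)))))

/-! ### The Answer Set Programming language proper -/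

/-- ASP terms: constants, or function symbols applied to terms. -/
inductive ASPTerm : Tm → Prop
  | const (s : String) : ASPTerm (.const s (.base .e))
  | fn (f : String) (args : List Tm) :
      args ≠ [] → (∀ x ∈ args, ASPTerm x) →
      ASPTerm (Tm.apps (.const f (Ty.arrN args.length (.base .e) (.base .e))) args)

/-- ASP atoms: predicate symbols applied to terms. -/
inductive ASPAtom : Tm → Prop
  | pred (p : String) (args : List Tm) :
      (∀ x ∈ args, ASPTerm x) →
      ASPAtom (Tm.apps (.const p (Ty.arrN args.length (.base .e) (.base .a))) args)

/-- ASP literals: atoms or negated atoms. -/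
inductive ASPLit : Tm → Prop
  | atom {x} : ASPAtom x → ASPLit x
  | neg {x} : ASPAtom x → ASPLit (.neg x)

/-- ASP gen-literals: literals or naf-literals. -/
inductive ASPGen : Tm → Prop
  | lit {x} : ASPLit x → ASPGen x
  | naf {x} : ASPLit x → ASPGen (.naf x)

/-- Heads of ASP rules: `or`-connected literals. -/
inductive ASPHead : Tm → Prop
  | lit {x} : ASPLit x → ASPHead x
  | disj {x y} : ASPHead x → ASPHead y → ASPHead (.disj x y)

/-- Bodies of ASP rules: `,`-connected gen-literals. -/
inductive ASPBody : Tm → Prop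
  | gen {x} : ASPGen x → ASPBody x
  | conj {x y} : ASPBody x → ASPBody y → ASPBody (.conj x y)

/-- ASP rules `L₀ or … or L_k ← L_{k+1},…, not L_n.` (including facts and
    constraints). -/
inductive ASPRule : Tm → Prop
  | mk {h b} : ASPHead h → ASPBody b → ASPRule (.rule h b)
  | fact {h} : ASPHead h → ASPRule (.ruleH h)
  | constr {b} : ASPBody b → ASPRule (.ruleB b)

/-- ASP programs: `.`-separated sequences of ASP rules. -/
inductive ASPProg : Tm → Prop
  | single {r} : ASPRule r → ASPProg r
  | seq {x y} : ASPProg x → ASPProg y → ASPProg (.seq x y)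

/-- Expressions of the ASP language, by base type. -/
def ASPExpr (M : Tm) : BTy → Prop
  | .e => ASPTerm M
  | .a => ASPAtom M
  | .l => ASPLit M
  | .g => ASPGen M
  | .h => ASPHead M
  | .d => ASPBody M
  | .t => ASPProg M


/-- Well-typed terms are unchanged by shifts beyond their context. -/
theorem HasType.shift_eq {Γ : List Ty} {t : Tm} {A : Ty} (h : HasType Γ t A) :
    ∀ c, Γ.length ≤ c → t.shift 1 c = t := by
  induction h with
  | @var Γ n A hn =>
    intro c hc
    have : n < Γ.length := by
      by_contra hlt
      rw [List.getElem?_eq_none (by omega)] at hn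
      cases hn
    simp only [Tm.shift]
    rw [if_pos (by omega)]
  | lam _ ih =>
    intro c hc
    simp only [Tm.shift]
    rw [ih (c + 1) (by simpa using hc)]
  | atomLit _ _ ih => exact ih
  | litGen _ _ ih => exact ih
  | litHead _ _ ih => exact ih
  | genBody _ _ ih => exact ih
  | _ => intro c hc; simp_all [Tm.shift]

/-- A λ-abstraction does not have a base type. -/
theorem HasType.not_lam {Γ : List Ty} {t : Tm} {A : Ty} (h : HasType Γ t A) :
    A.order = 0 → ∀ T b, t ≠ .lam T b := by
  induction h with
  | lam _ _ => intro h0; simp [Ty.order] at h0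
  | atomLit _ _ ih => intro _; exact ih rfl
  | litGen _ _ ih => intro _; exact ih rfl
  | litHead _ _ ih => intro _; exact ih rfl
  | genBody _ _ ih => intro _; exact ih rfl
  | _ => intro _ T b hh; cases hh

theorem Tm.shift_inj : ∀ (t u : Tm) (c : ℕ), t.shift 1 c = u.shift 1 c → t = u := by
  intro t
  induction t with
  | var n =>
    intro u c h
    cases u with
    | var m =>
      simp only [Tm.shift] at h
      split_ifs at h <;> simp only [Tm.var.injEq] at h ⊢ <;> omega
    | _ => simp only [Tm.shift] at h; split_ifs at h
  | _ =>
    intro u c h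
    cases u with
    | var m => simp only [Tm.shift] at h; split_ifs at h
    | _ => simp only [Tm.shift] at h; grind

/-- Replacing a closed term by a variable and substituting it back is the identity. -/
theorem Tm.subst_replace (G : Tm) (hG : ∀ c, G.shift 1 c = G) :
    ∀ (H : Tm) (j : ℕ), Tm.subst j G ((H.shift 1 j).replace G (.var j)) = H := by
  have key : ∀ (H : Tm) (j : ℕ), H.shift 1 j = G → Tm.subst j G (.var j) = H := by
    intro H j h
    simp only [Tm.subst, if_true]
    exact (Tm.shift_inj H G j (by rw [h, hG])).symm
  intro H
  induction H with
  | var n =>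
    intro j
    have hk := key (.var n) j
    simp only [Tm.shift] at hk ⊢
    split_ifs at hk ⊢ with hn
    all_goals
      simp only [Tm.replace]
      split_ifs with h
      · exact hk h
      · simp only [Tm.subst]
        split_ifs <;> first | omega | (simp only [Tm.var.injEq]; omega) | rfl
  | lam T b ih =>
    intro j
    have hk := key (.lam T b) j
    have hv : (Tm.var j).shift 1 0 = .var (j + 1) := by simp [Tm.shift]
    simp only [Tm.shift] at hk
    simp only [Tm.shift.eq_4, Tm.replace, hv, hG]
    by_cases h : Tm.lam T (Tm.shift 1 (j + 1) b) = G
    · rw [if_pos h]; exact hk h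
    · rw [if_neg h]; simp only [Tm.subst, hG, ih]
  | const s T =>
    intro j
    have hk := key (.const s T) j
    simp only [Tm.shift, Tm.replace] at hk ⊢
    split_ifs with h
    · exact hk h
    · rfl
  | app x y ih1 ih2 =>
    intro j
    have hk := key (.app x y) j
    simp only [Tm.shift, Tm.replace] at hk ⊢
    split_ifs with h
    · exact hk h
    · simp only [Tm.subst, ih1, ih2]
  | disj x y ih1 ih2 =>
    intro j
    have hk := key (.disj x y) j
    simp only [Tm.shift, Tm.replace] at hk ⊢
    split_ifs with h
    · exact hk h
    · simp only [Tm.subst, ih1, ih2]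
  | conj x y ih1 ih2 =>
    intro j
    have hk := key (.conj x y) j
    simp only [Tm.shift, Tm.replace] at hk ⊢
    split_ifs with h
    · exact hk h
    · simp only [Tm.subst, ih1, ih2]
  | rule x y ih1 ih2 =>
    intro j
    have hk := key (.rule x y) j
    simp only [Tm.shift, Tm.replace] at hk ⊢
    split_ifs with h
    · exact hk h
    · simp only [Tm.subst, ih1, ih2]
  | seq x y ih1 ih2 =>
    intro j
    have hk := key (.seq x y) j
    simp only [Tm.shift, Tm.replace] at hk ⊢
    split_ifs with h
    · exact hk h
    · simp only [Tm.subst, ih1, ih2]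
  | neg x ih =>
    intro j
    have hk := key (.neg x) j
    simp only [Tm.shift, Tm.replace] at hk ⊢
    split_ifs with h
    · exact hk h
    · simp only [Tm.subst, ih]
  | naf x ih =>
    intro j
    have hk := key (.naf x) j
    simp only [Tm.shift, Tm.replace] at hk ⊢
    split_ifs with h
    · exact hk h
    · simp only [Tm.subst, ih]
  | ruleH x ih =>
    intro j
    have hk := key (.ruleH x) j
    simp only [Tm.shift, Tm.replace] at hk ⊢
    split_ifs with h
    · exact hk h
    · simp only [Tm.subst, ih]
  | ruleB x ih =>
    intro j
    have hk := key (.ruleB x) j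
    simp only [Tm.shift, Tm.replace] at hk ⊢
    split_ifs with h
    · exact hk h
    · simp only [Tm.subst, ih]

/-- If the substituted variable is free, the closed term substituted for it occurs. -/
theorem Tm.occurs_subst (G : Tm) (hG : ∀ c, G.shift 1 c = G) :
    ∀ (b : Tm) (j : ℕ), b.hasFree j = true → Occurs G (Tm.subst j G b) := by
  intro b
  induction b with
  | var n =>
    intro j h
    have : n = j := by simpa [Tm.hasFree] using h
    subst this
    simp only [Tm.subst, if_true]
    exact .refl _
  | const s T => intro j h; simp [Tm.hasFree] at h
  | lam T b ih =>
    intro j h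
    simp only [Tm.subst, hG]
    exact .lam (ih _ h)
  | neg x ih => intro j h; exact .neg (ih _ h)
  | naf x ih => intro j h; exact .naf (ih _ h)
  | ruleH x ih => intro j h; exact .ruleH (ih _ h)
  | ruleB x ih => intro j h; exact .ruleB (ih _ h)
  | app x y ih1 ih2 =>
    intro j h
    rcases (Bool.or_eq_true _ _).mp h with h | h
    · exact .appL (ih1 _ h)
    · exact .appR (ih2 _ h)
  | disj x y ih1 ih2 =>
    intro j h
    rcases (Bool.or_eq_true _ _).mp h with h | h
    · exact .disjL (ih1 _ h)
    · exact .disjR (ih2 _ h)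
  | conj x y ih1 ih2 =>
    intro j h
    rcases (Bool.or_eq_true _ _).mp h with h | h
    · exact .conjL (ih1 _ h)
    · exact .conjR (ih2 _ h)
  | rule x y ih1 ih2 =>
    intro j h
    rcases (Bool.or_eq_true _ _).mp h with h | h
    · exact .ruleL (ih1 _ h)
    · exact .ruleR (ih2 _ h)
  | seq x y ih1 ih2 =>
    intro j h
    rcases (Bool.or_eq_true _ _).mp h with h | h
    · exact .seqL (ih1 _ h)
    · exact .seqR (ih2 _ h)

/-- Substituting a closed normal non-abstraction creates no redex. -/
theorem Tm.step_of_step_subst (G : Tm) (hG : ∀ c, G.shift 1 c = G)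
    (hl : ∀ T b, G ≠ .lam T b) (hn : G.IsNormal) :
    ∀ (b : Tm) (j : ℕ) (u : Tm), Step (Tm.subst j G b) u → ∃ b', Step b b' := by
  intro b
  induction b with
  | var n =>
    intro j u h
    simp only [Tm.subst] at h
    split_ifs at h
    · exact absurd h (hn u)
    · cases h
    · cases h
  | const s T => intro j u h; simp only [Tm.subst] at h; cases h
  | lam T b ih =>
    intro j u h
    simp only [Tm.subst, hG] at h
    cases h with
    | lam h => obtain ⟨bb, hst⟩ := ih _ _ h; exact ⟨_, .lam hst⟩
  | app f x ih1 ih2 =>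
    intro j u h
    simp only [Tm.subst] at h
    generalize hf : Tm.subst j G f = f1 at h
    cases h with
    | beta =>
      cases f with
      | lam T c => exact ⟨_, .beta⟩
      | var n =>
        simp only [Tm.subst] at hf
        split_ifs at hf
        exact absurd hf (hl _ _)
      | _ => simp only [Tm.subst] at hf; cases hf
    | appL h => subst hf; obtain ⟨bb, hst⟩ := ih1 _ _ h; exact ⟨_, .appL hst⟩
    | appR h => obtain ⟨bb, hst⟩ := ih2 _ _ h; exact ⟨_, .appR hst⟩
  | neg x ih =>
    intro j u h
    simp only [Tm.subst] at h
    cases h with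
    | neg h => obtain ⟨bb, hst⟩ := ih _ _ h; exact ⟨_, .neg hst⟩
  | naf x ih =>
    intro j u h
    simp only [Tm.subst] at h
    cases h with
    | naf h => obtain ⟨bb, hst⟩ := ih _ _ h; exact ⟨_, .naf hst⟩
  | ruleH x ih =>
    intro j u h
    simp only [Tm.subst] at h
    cases h with
    | ruleH h => obtain ⟨bb, hst⟩ := ih _ _ h; exact ⟨_, .ruleH hst⟩
  | ruleB x ih =>
    intro j u h
    simp only [Tm.subst] at h
    cases h with
    | ruleB h => obtain ⟨bb, hst⟩ := ih _ _ h; exact ⟨_, .ruleB hst⟩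
  | disj x y ih1 ih2 =>
    intro j u h
    simp only [Tm.subst] at h
    cases h with
    | disjL h => obtain ⟨bb, hst⟩ := ih1 _ _ h; exact ⟨_, .disjL hst⟩
    | disjR h => obtain ⟨bb, hst⟩ := ih2 _ _ h; exact ⟨_, .disjR hst⟩
  | conj x y ih1 ih2 =>
    intro j u h
    simp only [Tm.subst] at h
    cases h with
    | conjL h => obtain ⟨bb, hst⟩ := ih1 _ _ h; exact ⟨_, .conjL hst⟩
    | conjR h => obtain ⟨bb, hst⟩ := ih2 _ _ h; exact ⟨_, .conjR hst⟩
  | rule x y ih1 ih2 =>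
    intro j u h
    simp only [Tm.subst] at h
    cases h with
    | ruleL h => obtain ⟨bb, hst⟩ := ih1 _ _ h; exact ⟨_, .ruleL hst⟩
    | ruleR h => obtain ⟨bb, hst⟩ := ih2 _ _ h; exact ⟨_, .ruleR hst⟩
  | seq x y ih1 ih2 =>
    intro j u h
    simp only [Tm.subst] at h
    cases h with
    | seqL h => obtain ⟨bb, hst⟩ := ih1 _ _ h; exact ⟨_, .seqL hst⟩
    | seqR h => obtain ⟨bb, hst⟩ := ih2 _ _ h; exact ⟨_, .seqR hst⟩

/-- **Case `(0,1,0)` of `Inverse_L` completeness.**  For typed ASP λ-calculus formulas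
`H` and `G` in β-normal form where `H` has order 0 and `G` has order 0, if there
exists a typed ASP λ-calculus formula `F` of order 1 in β-normal form with
`H = F @ G`, then `Inverse_L(H,G)` returns a non-null formula `F'` with `H = F' @ G`. -/
theorem invL_complete_case_010 (H G : Tm) (A B : Ty)
    (hH : IsFormula H A) (hG : IsFormula G B)
    (hHnf : H.IsNormal) (hGnf : G.IsNormal)
    (hHo : A.order = 0) (hGo : B.order = 0)
    (F : Tm) (C : Ty) (hF : IsFormula F C) (hFo : C.order = 1) (hFnf : F.IsNormal)
    (heq : NormalizesTo (Tm.app F G) H) :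
    ∃ F', InvL H G F' ∧ NormalizesTo (Tm.app F' G) H := by
  have hcl : ∀ c, G.shift 1 c = G := fun c => hG.typed.shift_eq c (by simp)
  have hl := hG.typed.not_lam hGo
  have hocc : Occurs G H := by
    obtain ⟨hst, _⟩ := heq
    rcases hst.cases_head with h | ⟨M, h1, h2⟩
    · rw [← h]; exact .appR (.refl _)
    · cases h1 with
      | @beta T b _ =>
        have hfree : b.hasFree 0 = true := by
          have := hF.lamI
          simp only [Tm.lamI, Bool.and_eq_true] at this
          exact this.2
        rcases h2.cases_head with h | ⟨N, h3, _⟩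
        · rw [← h]; exact Tm.occurs_subst G hcl b 0 hfree
        · obtain ⟨bb, hb⟩ := Tm.step_of_step_subst G hcl hl hGnf b 0 N h3
          exact absurd (Step.lam hb) (hFnf _)
      | appL h => exact absurd h (hFnf _)
      | appR h => exact absurd h (hGnf _)
  refine ⟨_, InvL.case2 H G B hocc hG.typed, ?_, hHnf⟩
  have hs := Tm.subst_replace G hcl H 0
  refine Relation.ReflTransGen.single ?_
  have hb := @Step.beta B ((H.shift 1 0).replace G (.var 0)) G
  rw [hs] at hb
  rw [hcl 0]
  exact hb

end ASPLambda
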